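/- Let n₀,n₁,n₂,n₃ ∈ ℂ and let (p(τ), A(τ)) be a pair of holomorphic functions on an open connected subset V ⊆ ℍ such that for every τ ∈ V one has 2p(τ) ∉ Λ_τ and p(τ) + ω_k/2 ∉ Λ_τ for k = 0,1,2,3. If (p, A) satisfies the Hamiltonian system, then p satisfies the elliptic form of Painlevé VI with parameters α_k = (1/2)(n_k + 1/2)², i.e. d²p/dτ² = (−1/(4π²)) Σ_{k=0}^{3} (1/2)(n_k + 1/2)² ℘′(p(τ) + ω_k/2 | τ) on V. -/

import Mathlib

open Complex Filter Topology Asymptotics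

noncomputable section

/-- membership in the lattice `Λ_τ = ℤ + τℤ`. -/
def InLattice (τ z : ℂ) : Prop := ∃ m n : ℤ, z = (m : ℂ) + (n : ℂ) * τ

/-- the half-period generators `ω₀ = 0, ω₁ = 1, ω₂ = τ, ω₃ = 1 + τ`. -/
def halfp (τ : ℂ) : Fin 4 → ℂ := ![0, 1, τ, 1 + τ]

/-- the Weierstrass elliptic function `℘(z|τ)`. -/
def wp (τ z : ℂ) : ℂ :=
  z⁻¹ ^ 2 + ∑' w : {w : ℤ × ℤ // w ≠ 0},
    ((z - ((w.1.1 : ℂ) + (w.1.2 : ℂ) * τ))⁻¹ ^ 2 - ((w.1.1 : ℂ) + (w.1.2 : ℂ) * τ)⁻¹ ^ 2)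

/-- `℘′(z|τ)`, the `z`-derivative of `℘`. -/
def wpd (τ z : ℂ) : ℂ := deriv (wp τ) z

/-- `℘″(z|τ)`. -/
def wpdd (τ z : ℂ) : ℂ := deriv (wpd τ) z

def e1 (τ : ℂ) : ℂ := wp τ (1 / 2)
def e2 (τ : ℂ) : ℂ := wp τ (τ / 2)
def e3 (τ : ℂ) : ℂ := wp τ ((1 + τ) / 2)

def g2 (τ : ℂ) : ℂ := -4 * (e1 τ * e2 τ + e1 τ * e3 τ + e2 τ * e3 τ)

/-- `zeta` is the Weierstrass zeta function: for each `τ ∈ ℍ`, `zeta τ` is odd, satisfies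
`∂ζ/∂z = -℘` off the lattice, and `ζ(z|τ) - 1/z → 0` as `z → 0`. -/
def IsWeierstrassZeta (zeta : ℂ → ℂ → ℂ) : Prop :=
  ∀ τ : ℂ, 0 < τ.im →
    (∀ z : ℂ, zeta τ (-z) = - zeta τ z) ∧
    (∀ z : ℂ, ¬ InLattice τ z → HasDerivAt (zeta τ) (- wp τ z) z) ∧
    Tendsto (fun z => zeta τ z - z⁻¹) (𝓝[≠] (0 : ℂ)) (𝓝 0)

/-- `eta1 τ = ζ(z+1|τ) - ζ(z|τ)` is the first quasi-period. -/
def IsEta1 (zeta : ℂ → ℂ → ℂ) (eta1 : ℂ → ℂ) : Prop :=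
  ∀ τ : ℂ, 0 < τ.im → ∀ z : ℂ, ¬ InLattice τ z →
    eta1 τ = zeta τ (z + 1) - zeta τ z

/-- `eta2 τ = ζ(z+τ|τ) - ζ(z|τ)` is the second quasi-period. -/
def IsEta2 (zeta : ℂ → ℂ → ℂ) (eta2 : ℂ → ℂ) : Prop :=
  ∀ τ : ℂ, 0 < τ.im → ∀ z : ℂ, ¬ InLattice τ z →
    eta2 τ = zeta τ (z + τ) - zeta τ z

/-- `sigma` is the Weierstrass sigma function: entire, odd, with
`∂/∂z log σ = ζ` off the lattice and `σ(z|τ)/z → 1` as `z → 0`. -/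
def IsWeierstrassSigma (zeta sigma : ℂ → ℂ → ℂ) : Prop :=
  ∀ τ : ℂ, 0 < τ.im →
    (∀ z : ℂ, sigma τ (-z) = - sigma τ z) ∧
    Differentiable ℂ (sigma τ) ∧
    (∀ z : ℂ, ¬ InLattice τ z → HasDerivAt (sigma τ) (zeta τ z * sigma τ z) z) ∧
    Tendsto (fun z => sigma τ z / z) (𝓝[≠] (0 : ℂ)) (𝓝 1)

/-- the Hamiltonian system (142) for `(p(τ), A(τ))` on `V`. -/
def HamSystem (n : Fin 4 → ℂ) (zeta : ℂ → ℂ → ℂ) (eta1 : ℂ → ℂ)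
    (V : Set ℂ) (p A : ℂ → ℂ) : Prop :=
  ∀ τ ∈ V,
    HasDerivAt p ((-Complex.I / (4 * (Real.pi : ℂ))) *
      (2 * A τ - zeta τ (2 * p τ) + 2 * p τ * eta1 τ)) τ ∧
    HasDerivAt A ((Complex.I / (4 * (Real.pi : ℂ))) *
      ((2 * wp τ (2 * p τ) + 2 * eta1 τ) * A τ - (3 / 2) * wpd τ (2 * p τ)
        - ∑ k : Fin 4, n k * (n k + 1) * wpd τ (p τ + halfp τ k / 2))) τ

/-- the generalized Lamé potential `I(z;τ)`. -/
def Ipot (n : Fin 4 → ℂ) (zeta : ℂ → ℂ → ℂ) (A B p τ z : ℂ) : ℂ :=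
  (∑ k : Fin 4, n k * (n k + 1) * wp τ (z + halfp τ k / 2))
    + (3 / 4) * (wp τ (z + p) + wp τ (z - p))
    + A * (zeta τ (z + p) - zeta τ (z - p)) + B

end

/-!
Write `E = ζ(z|τ) - η₁(τ)z = ∂_z log θ₁`, so that `∂_z E = -℘ - η₁` and the first Hamiltonian
equation reads `p' = -(i/4π)(2A - E(2p))`. Summing `1 / (z + m + nτ)` by rows gives
`E = ∑ₙ (π cot(π(z + nτ)) + πi sgn(n))`, where `∂_τ` acts on the `n`-th term as `n ∂_z`; hence
`∂_τ E = ∂_z M` with `M = ∑ₙ n (π cot(π(z + nτ)) + πi sgn(n))`. By Liouville's theorem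
`M + (i/4π)(E² - ℘)` is constant in `z` (the heat equation for `θ₁`), which makes `∂_τ E` explicit.
Differentiating `p'` once more, `A` cancels and what remains is
`-(1/4π²)(½ ∑ₖ nₖ(nₖ + 1)℘'(p + ωₖ/2) + ℘'(2p))`; the duplication formula
`8℘'(2z) = ∑ₖ ℘'(z + ωₖ/2)` completes the square in `nₖ`.
-/

section Lattice

variable {τ z : ℂ}

lemma InLattice.neg (hz : InLattice τ z) : InLattice τ (-z) := by
  obtain ⟨m, n, rfl⟩ := hz
  exact ⟨-m, -n, by push_cast; ring⟩

lemma InLattice.of_add_one (hz : InLattice τ (z + 1)) : InLattice τ z := by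
  obtain ⟨m, n, h⟩ := hz
  exact ⟨m - 1, n, by push_cast; linear_combination h⟩

lemma isConnected_compl_inLattice (τ : ℂ) : IsConnected {z | InLattice τ z}ᶜ := by
  have hrange : {z | InLattice τ z} = Set.range fun w : ℤ × ℤ => (w.1 : ℂ) + w.2 * τ := by
    ext z
    simp [InLattice, eq_comm]
  rw [hrange]
  exact (Set.countable_range _).isConnected_compl_of_one_lt_rank (by simp)

/-- The period pair `(1, τ)` of a point `τ` of the upper half-plane, through which the theory of
`PeriodPair` applies to `Λ_τ`. -/
noncomputable def upperPeriodPair (hτ : 0 < τ.im) : PeriodPair where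
  ω₁ := 1
  ω₂ := τ
  indep := by
    rw [LinearIndependent.pair_iff]
    intro s t h
    have ht : t = 0 := by simpa [hτ.ne'] using congrArg Complex.im h
    subst ht
    simpa using congrArg Complex.re h

lemma mem_upperPeriodPair_lattice (hτ : 0 < τ.im) :
    z ∈ (upperPeriodPair hτ).lattice ↔ InLattice τ z := by
  rw [PeriodPair.mem_lattice]
  simp [InLattice, upperPeriodPair, eq_comm]

lemma coe_upperPeriodPair_lattice (hτ : 0 < τ.im) :
    ((upperPeriodPair hτ).lattice : Set ℂ) = {z | InLattice τ z} :=
  Set.ext fun _ => mem_upperPeriodPair_lattice hτ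

lemma isOpen_compl_inLattice (hτ : 0 < τ.im) : IsOpen {z | InLattice τ z}ᶜ :=
  coe_upperPeriodPair_lattice hτ ▸ (upperPeriodPair hτ).isClosed_lattice.isOpen_compl

lemma hasSum_int_prod_iff_hasSum_lattice (hτ : 0 < τ.im) {E : Type*} [AddCommMonoid E]
    [TopologicalSpace E] {f : ℂ → E} {a : E} :
    HasSum (fun w : ℤ × ℤ => f (w.1 + w.2 * τ)) a ↔
      HasSum (fun l : (upperPeriodPair hτ).lattice => f l) a := by
  set L := upperPeriodPair hτ with hL
  rw [← L.latticeEquivProd.symm.toEquiv.hasSum_iff]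
  refine iff_of_eq (congrArg (HasSum · a) (funext fun w => ?_))
  have hw : ((L.latticeEquivProd.symm w : L.lattice) : ℂ) = w.1 + w.2 * τ := by
    simpa [hL, upperPeriodPair] using L.latticeEquiv_symm_apply w
  exact congrArg f hw.symm

lemma wp_eq_weierstrassP (hτ : 0 < τ.im) : wp τ = (upperPeriodPair hτ).weierstrassP := by
  funext z
  have h := (hasSum_int_prod_iff_hasSum_lattice hτ (f := fun l => 1 / (z - l) ^ 2 - 1 / l ^ 2)).mpr
    ((upperPeriodPair hτ).hasSum_weierstrassP z)
  rw [← h.tsum_eq, ← h.summable.tsum_subtype_add_tsum_subtype_compl {0}, wp]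
  congr 1
  · simp [tsum_fintype]
  · exact tsum_congr fun _ => by simp only [one_div, inv_pow]

lemma wpd_eq_derivWeierstrassP (hτ : 0 < τ.im) :
    wpd τ = (upperPeriodPair hτ).derivWeierstrassP := by
  rw [← PeriodPair.deriv_weierstrassP, ← wp_eq_weierstrassP]
  rfl

lemma hasSum_wp (hτ : 0 < τ.im) (z : ℂ) :
    HasSum (fun w : ℤ × ℤ => 1 / (z + (w.1 + w.2 * τ)) ^ 2 - 1 / (w.1 + w.2 * τ) ^ 2)
      (wp τ z) := by
  have h := (Equiv.neg _).hasSum_iff.mpr ((upperPeriodPair hτ).hasSum_weierstrassP z)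
  rw [wp_eq_weierstrassP hτ]
  refine (hasSum_int_prod_iff_hasSum_lattice hτ
    (f := fun l => 1 / (z + l) ^ 2 - 1 / l ^ 2)).mpr ?_
  simpa [Function.comp_def] using h

lemma hasSum_wpd (hτ : 0 < τ.im) (z : ℂ) :
    HasSum (fun w : ℤ × ℤ => -2 / (z + (w.1 + w.2 * τ)) ^ 3) (wpd τ z) := by
  have h := (Equiv.neg _).hasSum_iff.mpr ((upperPeriodPair hτ).hasSum_derivWeierstrassP z)
  rw [wpd_eq_derivWeierstrassP hτ]
  refine (hasSum_int_prod_iff_hasSum_lattice hτ (f := fun l => -2 / (z + l) ^ 3)).mpr ?_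
  simpa [Function.comp_def] using h

lemma analyticAt_wp (hτ : 0 < τ.im) (hz : ¬ InLattice τ z) : AnalyticAt ℂ (wp τ) z := by
  rw [wp_eq_weierstrassP hτ]
  exact (upperPeriodPair hτ).analyticOnNhd_weierstrassP z
    fun h => hz ((mem_upperPeriodPair_lattice hτ).mp h)

lemma periodic_wp_one (hτ : 0 < τ.im) : Function.Periodic (wp τ) 1 := by
  rw [wp_eq_weierstrassP hτ]
  exact (upperPeriodPair hτ).periodic_weierstrassP ⟨_, (upperPeriodPair hτ).ω₁_mem_lattice⟩

lemma periodic_wp_tau (hτ : 0 < τ.im) : Function.Periodic (wp τ) τ := by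
  rw [wp_eq_weierstrassP hτ]
  exact (upperPeriodPair hτ).periodic_weierstrassP ⟨_, (upperPeriodPair hτ).ω₂_mem_lattice⟩

end Lattice

section Liouville

open scoped Classical in
lemma exists_differentiable_periodic_eqOn_compl_lattice (L : PeriodPair) {f : ℂ → ℂ}
    (hd : DifferentiableOn ℂ f (L.lattice : Set ℂ)ᶜ)
    (hper : ∀ l ∈ L.lattice, Function.Periodic f l) (ho : f =o[𝓝[≠] 0] fun z => z⁻¹) :
    ∃ g : ℂ → ℂ, Differentiable ℂ g ∧ (∀ l ∈ L.lattice, Function.Periodic g l) ∧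
      Set.EqOn g f (L.lattice : Set ℂ)ᶜ := by
  set g : ℂ → ℂ := (L.lattice : Set ℂ).piecewise (fun _ => limUnder (𝓝[≠] 0) f) f with hg
  have heq : Set.EqOn g f (L.lattice : Set ℂ)ᶜ := Set.piecewise_eqOn_compl _ _ _
  have hgper : ∀ l ∈ L.lattice, Function.Periodic g l := fun l hl z => by
    simp [hg, Set.piecewise, L.lattice.add_mem_iff_left hl, hper l hl z]
  have hzero : DifferentiableAt ℂ g 0 := by
    have hs : ((L.lattice : Set ℂ) \ {0})ᶜ ∈ 𝓝 (0 : ℂ) :=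
      L.compl_lattice_sdiff_singleton_mem_nhds 0
    have hconst : (fun _ : ℂ => f 0) =o[𝓝[≠] 0] fun z : ℂ => z⁻¹ := by
      refine isLittleO_const_left.mpr (Or.inr ?_)
      simpa only [Function.comp_def, norm_inv] using
        tendsto_norm_inv_nhdsNE_zero_atTop (α := ℂ)
    have hupdate := Complex.differentiableOn_update_limUnder_of_isLittleO (f := f) hs
      (hd.mono fun z hz hzl => hz.1 ⟨hzl, hz.2⟩) (by simpa using ho.sub hconst)
    refine (hupdate.differentiableAt hs).congr_of_eventuallyEq ?_
    filter_upwards [hs] with z hz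
    rcases eq_or_ne z 0 with rfl | hz0
    · simp [hg]
    · rw [Function.update_of_ne hz0, heq fun h => hz ⟨h, hz0⟩]
  refine ⟨g, fun z => ?_, hgper, heq⟩
  by_cases hz : z ∈ L.lattice
  · rw [← funext ((hgper z hz).sub_eq)]
    exact DifferentiableAt.comp (g := g) z (by simpa using hzero) (by fun_prop)
  · have hnhds := L.isClosed_lattice.isOpen_compl.mem_nhds hz
    exact (hd.differentiableAt hnhds).congr_of_eventuallyEq (heq.eventuallyEq_of_mem hnhds)

lemma exists_eqOn_const_compl_lattice (L : PeriodPair) {f : ℂ → ℂ}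
    (hd : DifferentiableOn ℂ f (L.lattice : Set ℂ)ᶜ)
    (hper : ∀ l ∈ L.lattice, Function.Periodic f l) (ho : f =o[𝓝[≠] 0] fun z => z⁻¹) :
    ∃ K, Set.EqOn f (fun _ => K) (L.lattice : Set ℂ)ᶜ := by
  obtain ⟨g, hg, hgper, heq⟩ := exists_differentiable_periodic_eqOn_compl_lattice L hd hper ho
  have hb := (IsZLattice.isCompact_range_of_periodic L.lattice g hg.continuous
    fun z l hl => hgper l hl z).isBounded
  exact ⟨g 0, fun z hz => (heq hz).symm.trans (hg.apply_eq_apply_of_bounded hb z 0)⟩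

lemma exists_eqOn_const_of_doubly_periodic {τ : ℂ} (hτ : 0 < τ.im) {f : ℂ → ℂ}
    (hd : DifferentiableOn ℂ f {z | InLattice τ z}ᶜ) (hone : Function.Periodic f 1)
    (htau : Function.Periodic f τ) (hzero : Tendsto (fun z => z * f z) (𝓝[≠] 0) (𝓝 0)) :
    ∃ K, Set.EqOn f (fun _ => K) {z | InLattice τ z}ᶜ := by
  rw [← coe_upperPeriodPair_lattice hτ] at hd ⊢
  refine exists_eqOn_const_compl_lattice _ hd (fun l hl => ?_) ?_
  · obtain ⟨m, n, rfl⟩ := (mem_upperPeriodPair_lattice hτ).mp hl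
    simpa using (hone.int_mul m).add_period (htau.int_mul n)
  · have hinv : ∀ᶠ z : ℂ in 𝓝[≠] 0, z⁻¹ = 0 → f z = 0 :=
      eventually_mem_nhdsWithin.mono fun z hz h => absurd (inv_eq_zero.mp h) hz
    rw [isLittleO_iff_tendsto' hinv]
    simpa only [div_inv_eq_mul, mul_comm] using hzero

end Liouville

section Cotangent

/-- The cotangent `π cot(πw)`, normalized to have period `1` and residue `1` at each integer. -/
noncomputable def piCot (w : ℂ) : ℂ := Real.pi * cot (Real.pi * w)

lemma piCot_neg (w : ℂ) : piCot (-w) = -piCot w := by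
  simp [piCot, Complex.cot, div_neg]

lemma piCot_add_one (w : ℂ) : piCot (w + 1) = piCot w := by
  simp [piCot, Complex.cot, mul_add, sin_add_pi, cos_add_pi]

lemma deriv_piCot_neg (w : ℂ) : deriv piCot (-w) = deriv piCot w := by
  have h := deriv_comp_neg piCot w
  rw [funext piCot_neg, deriv.fun_neg, neg_inj] at h
  exact h.symm

lemma differentiableAt_piCot {w : ℂ} (hw : w ∈ integerComplement) :
    DifferentiableAt ℂ piCot w := by
  unfold piCot Complex.cot
  have hsin := sin_pi_mul_ne_zero hw
  fun_prop (disch := assumption)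

lemma hasSum_deriv_piCot_of_im_pos {w : ℂ} (hw : 0 < w.im) :
    HasSum (fun m : ℤ => 1 / (w + m) ^ 2) (-deriv piCot w) := by
  have hderiv := iteratedDerivWithin_cot_pi_mul_eq_mul_tsum_div_pow le_rfl hw
  rw [iteratedDerivWithin_one, derivWithin_of_isOpen UpperHalfPlane.isOpen_upperHalfPlaneSet hw]
    at hderiv
  have hsum : Summable fun m : ℤ => 1 / (w + m) ^ 2 := by
    simpa using EisensteinSeries.linear_right_summable w 1 (k := 2) le_rfl
  refine hsum.hasSum_iff.mpr ?_
  rw [show deriv piCot w = _ from hderiv]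
  simp

lemma hasSum_deriv_piCot {w : ℂ} (hw : w.im ≠ 0) :
    HasSum (fun m : ℤ => 1 / (w + m) ^ 2) (-deriv piCot w) := by
  rcases hw.lt_or_gt with hneg | hpos
  · have h := hasSum_deriv_piCot_of_im_pos (w := -w) (by simpa using hneg)
    rw [deriv_piCot_neg] at h
    refine ((Equiv.neg ℤ).hasSum_iff.mpr h).congr_fun fun m => ?_
    simp [← neg_add_rev, add_comm]
  · exact hasSum_deriv_piCot_of_im_pos hpos

lemma piCot_add_pi_mul_I (w : ℂ) (hw : exp (2 * Real.pi * I * w) ≠ 1) :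
    piCot w + Real.pi * I =
      2 * Real.pi * I * exp (2 * Real.pi * I * w) / (exp (2 * Real.pi * I * w) - 1) := by
  rw [piCot, cot_pi_eq_exp_ratio]
  generalize exp (2 * Real.pi * I * w) = e at hw ⊢
  have he : e - 1 ≠ 0 := sub_ne_zero.mpr hw
  rw [← neg_sub e 1]
  field_simp
  ring_nf
  simp only [I_sq]
  ring

lemma norm_piCot_add_le {w : ℂ} (hw : 1 ≤ w.im) :
    ‖piCot w + Real.pi * I‖ ≤ 4 * Real.pi * Real.exp (-(2 * Real.pi * w.im)) := by
  have hnorm : ‖exp (2 * Real.pi * I * w)‖ = Real.exp (-(2 * Real.pi * w.im)) := by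
    simp [Complex.norm_exp]
  have hsmall : ‖exp (2 * Real.pi * I * w)‖ ≤ 1 / 2 := by
    have h2 : 2 ≤ Real.exp (2 * Real.pi * w.im) := by
      nlinarith [Real.pi_gt_three, Real.add_one_le_exp (2 * Real.pi * w.im)]
    rw [hnorm, Real.exp_neg, one_div]
    exact inv_anti₀ two_pos h2
  have hlarge : 1 / 2 ≤ ‖exp (2 * Real.pi * I * w) - 1‖ := by
    have := norm_sub_norm_le 1 (exp (2 * Real.pi * I * w))
    rw [norm_one, norm_sub_rev] at this
    linarith
  have hne : exp (2 * Real.pi * I * w) ≠ 1 := fun h => by norm_num [h] at hsmall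
  rw [piCot_add_pi_mul_I w hne, ← hnorm, norm_div, div_le_iff₀ (by linarith)]
  simp only [norm_mul, norm_I, Complex.norm_real, Complex.norm_ofNat, mul_one, Real.norm_eq_abs,
    abs_of_pos Real.pi_pos]
  nlinarith [mul_nonneg Real.pi_pos.le (norm_nonneg (exp (2 * Real.pi * I * w)))]

end Cotangent

section RowMoment

/-- The `n`-th term of the row moments: the Eisenstein sum `π cot(π(z + nτ))` of `1 / (z + m + nτ)`
over the row `m ∈ ℤ`, with its limit `-πi sgn(n)` as `n → ±∞` removed to secure convergence. -/
noncomputable def rowTerm (n : ℤ) (τ z : ℂ) : ℂ := piCot (z + n * τ) + Real.pi * I * (n.sign : ℂ)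

lemma rowTerm_add_one (n : ℤ) (τ z : ℂ) : rowTerm n τ (z + 1) = rowTerm n τ z := by
  rw [rowTerm, rowTerm, add_right_comm, piCot_add_one]

lemma rowTerm_add_tau (n : ℤ) (τ z : ℂ) : rowTerm n τ (z + τ) =
    rowTerm (n + 1) τ z + Real.pi * I * ((n.sign : ℂ) - ((n + 1).sign : ℂ)) := by
  have hrow : z + τ + n * τ = z + ((n + 1 : ℤ) : ℂ) * τ := by push_cast; ring
  rw [rowTerm, rowTerm, hrow]
  ring

lemma rowTerm_neg (n : ℤ) (τ z : ℂ) : rowTerm n τ (-z) = -rowTerm (-n) τ z := by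
  have hrow : -z + n * τ = -(z + ((-n : ℤ) : ℂ) * τ) := by push_cast; ring
  rw [rowTerm, rowTerm, hrow, piCot_neg, Int.sign_neg]
  push_cast
  ring

lemma hasDerivAt_rowTerm_comp {n : ℤ} {a b : ℂ → ℂ} {a' b' s : ℂ} (ha : HasDerivAt a a' s)
    (hb : HasDerivAt b b' s) (hs : a s + n * b s ∈ integerComplement) :
    HasDerivAt (fun s => rowTerm n (b s) (a s))
      (deriv piCot (a s + n * b s) * (a' + n * b')) s :=
  ((differentiableAt_piCot hs).hasDerivAt.comp s (ha.add (hb.const_mul (n : ℂ)))).add_const _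

lemma norm_rowTerm_le_of_nonneg {n : ℤ} {τ z : ℂ} {M δ : ℝ} (hn : 0 ≤ n) (hz : |z.im| ≤ M)
    (hτ : δ ≤ τ.im) (hM : M + 1 ≤ n * δ) :
    ‖rowTerm n τ z‖ ≤ 4 * Real.pi * Real.exp (-(2 * Real.pi * (n * δ - M))) := by
  have hn' : (0 : ℝ) ≤ n := mod_cast hn
  have hpos : 0 < n := hn.lt_of_ne' fun h => by
    have := (abs_nonneg z.im).trans hz
    simp only [h, Int.cast_zero, zero_mul] at hM
    linarith
  have him : n * δ - M ≤ (z + n * τ).im := by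
    have := mul_le_mul_of_nonneg_left hτ hn'
    have := (abs_le.mp hz).1
    simp only [add_im, mul_im, intCast_re, intCast_im, zero_mul, add_zero]
    linarith
  rw [rowTerm, Int.sign_eq_one_of_pos hpos, Int.cast_one, mul_one]
  refine (norm_piCot_add_le (by linarith)).trans ?_
  gcongr

lemma norm_rowTerm_le {n : ℤ} {τ z : ℂ} {M δ : ℝ} (hz : |z.im| ≤ M) (hτ : δ ≤ τ.im)
    (hM : M + 1 ≤ |(n : ℝ)| * δ) :
    ‖rowTerm n τ z‖ ≤ 4 * Real.pi * Real.exp (-(2 * Real.pi * (|(n : ℝ)| * δ - M))) := by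
  rcases le_total 0 n with hn | hn
  · rw [abs_of_nonneg (mod_cast hn)] at hM ⊢
    exact norm_rowTerm_le_of_nonneg hn hz hτ hM
  · have hflip : ‖rowTerm n τ z‖ = ‖rowTerm (-n) τ (-z)‖ := by
      rw [rowTerm_neg, neg_neg, norm_neg]
    rw [abs_of_nonpos (mod_cast hn), ← Int.cast_neg] at hM ⊢
    rw [hflip]
    exact norm_rowTerm_le_of_nonneg (neg_nonneg.mpr hn) (by simpa using hz) hτ hM

lemma summable_abs_pow_mul_exp_neg (k : ℕ) {r : ℝ} (hr : 0 < r) :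
    Summable fun n : ℤ => |(n : ℝ)| ^ k * Real.exp (-r * |(n : ℝ)|) := by
  have h := Real.summable_pow_mul_exp_neg_nat_mul k hr
  exact Summable.of_nat_of_neg (by simpa using h) (by simpa using h)

/-- The `k`-th row moment `∑ₙ nᵏ (π cot(π(z + nτ)) + πi sgn(n))`. For `k = 0` this is
`ζ(z|τ) - η₁(τ)z`, the logarithmic derivative of `θ₁`, and `k` counts derivatives in `τ`. -/
noncomputable def rowMoment (k : ℕ) (τ z : ℂ) : ℂ := ∑' n : ℤ, (n : ℂ) ^ k * rowTerm n τ z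

/-- The points at which no row of nonzero weight `nᵏ` contributes a pole to the `k`-th row
moment. -/
def rowDomain (k : ℕ) (τ : ℂ) : Set ℂ :=
  {z | ∀ n : ℤ, (n : ℂ) ^ k ≠ 0 → z + n * τ ∈ integerComplement}

variable {k : ℕ} {a b : ℂ → ℂ} {U : Set ℂ} {s τ z : ℂ}

lemma compl_inLattice_subset_rowDomain (k : ℕ) (τ : ℂ) :
    {z | InLattice τ z}ᶜ ⊆ rowDomain k τ := by
  rintro z hz n - ⟨m, hm⟩
  exact hz ⟨m, -n, by push_cast; linear_combination -hm⟩

lemma isOpen_rowDomain (k : ℕ) (hτ : 0 < τ.im) : IsOpen (rowDomain k τ) := by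
  refine isClosed_compl_iff.mp ((upperPeriodPair hτ).isClosed_of_subset_lattice ?_)
  rw [coe_upperPeriodPair_lattice]
  exact Set.compl_subset_comm.mp (compl_inLattice_subset_rowDomain k τ)

lemma zero_mem_rowDomain_one (hτ : 0 < τ.im) : 0 ∈ rowDomain 1 τ := by
  rintro n hn ⟨m, hm⟩
  have him : n = 0 ∨ τ.im = 0 := by simpa using congrArg Complex.im hm
  exact hn (by simp [him.resolve_right hτ.ne'])

lemma summableLocallyUniformlyOn_pow_mul_rowTerm (k : ℕ) (hU : IsOpen U) (ha : ContinuousOn a U)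
    (hb : ContinuousOn b U) (him : ∀ s ∈ U, 0 < (b s).im) :
    SummableLocallyUniformlyOn (fun (n : ℤ) s => (n : ℂ) ^ k * rowTerm n (b s) (a s)) U := by
  refine SummableLocallyUniformlyOn.of_locally_bounded_eventually hU fun K hK hKc => ?_
  rcases K.eq_empty_or_nonempty with rfl | hne
  · exact ⟨0, summable_zero, by simp⟩
  obtain ⟨s₁, hs₁, hmin⟩ := hKc.exists_isMinOn hne
    (continuous_im.comp_continuousOn (hb.mono hK))
  obtain ⟨s₂, -, hmax⟩ := hKc.exists_isMaxOn hne
    (continuous_im.comp_continuousOn (ha.mono hK)).abs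
  set δ := (b s₁).im
  set M := |(a s₂).im|
  have hδ : 0 < δ := him s₁ (hK hs₁)
  refine ⟨fun n => 4 * Real.pi * Real.exp (2 * Real.pi * M) *
    (|(n : ℝ)| ^ k * Real.exp (-(2 * Real.pi * δ) * |(n : ℝ)|)),
    (summable_abs_pow_mul_exp_neg k (by positivity)).mul_left _, ?_⟩
  have habs : Tendsto (fun n : ℤ => |(n : ℝ)|) cofinite atTop :=
    (tendsto_norm_cocompact_atTop (E := ℝ)).comp Int.tendsto_coe_cofinite
  filter_upwards [(habs.atTop_mul_const hδ).eventually_ge_atTop (M + 1)] with n hn s hs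
  calc ‖(n : ℂ) ^ k * rowTerm n (b s) (a s)‖
      ≤ |(n : ℝ)| ^ k * (4 * Real.pi * Real.exp (-(2 * Real.pi * (|(n : ℝ)| * δ - M)))) := by
        rw [norm_mul, norm_pow, norm_intCast]
        gcongr
        exact norm_rowTerm_le (hmax hs) (hmin hs) hn
    _ = _ := by
        rw [show -(2 * Real.pi * (|(n : ℝ)| * δ - M)) =
          2 * Real.pi * M + -(2 * Real.pi * δ) * |(n : ℝ)| by ring, Real.exp_add]
        ring

lemma tendstoLocallyUniformlyOn_rowMoment (k : ℕ) (hU : IsOpen U) (ha : ContinuousOn a U)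
    (hb : ContinuousOn b U) (him : ∀ s ∈ U, 0 < (b s).im) :
    TendstoLocallyUniformlyOn
      (fun (t : Finset ℤ) s => ∑ n ∈ t, (n : ℂ) ^ k * rowTerm n (b s) (a s))
      (fun s => rowMoment k (b s) (a s)) atTop U :=
  hasSumLocallyUniformlyOn_iff_tendstoLocallyUniformlyOn.mp
    (summableLocallyUniformlyOn_pow_mul_rowTerm k hU ha hb him).hasSumLocallyUniformlyOn

lemma hasSum_rowMoment (k : ℕ) (hτ : 0 < τ.im) (z : ℂ) :
    HasSum (fun n : ℤ => (n : ℂ) ^ k * rowTerm n τ z) (rowMoment k τ z) :=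
  (tendstoLocallyUniformlyOn_rowMoment k isOpen_univ continuousOn_const continuousOn_const
    fun _ _ => hτ).tendsto_at (Set.mem_univ z)

lemma hasDerivAt_pow_mul_rowTerm_comp {n : ℤ} {a' b' : ℂ} (ha : HasDerivAt a a' s)
    (hb : HasDerivAt b b' s) (hs : a s ∈ rowDomain k (b s)) :
    HasDerivAt (fun s => (n : ℂ) ^ k * rowTerm n (b s) (a s))
      ((n : ℂ) ^ k * (deriv piCot (a s + n * b s) * (a' + n * b'))) s := by
  by_cases hn : (n : ℂ) ^ k = 0
  · simpa [hn] using hasDerivAt_const s (0 : ℂ)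
  · exact (hasDerivAt_rowTerm_comp ha hb (hs n hn)).const_mul _

lemma differentiableOn_sum_pow_mul_rowTerm (hU : IsOpen U) (ha : DifferentiableOn ℂ a U)
    (hb : DifferentiableOn ℂ b U) (hreg : ∀ s ∈ U, a s ∈ rowDomain k (b s)) (t : Finset ℤ) :
    DifferentiableOn ℂ (fun s => ∑ n ∈ t, (n : ℂ) ^ k * rowTerm n (b s) (a s)) U :=
  DifferentiableOn.fun_sum fun _ _ s hs => (hasDerivAt_pow_mul_rowTerm_comp
    (ha.hasDerivAt (hU.mem_nhds hs)) (hb.hasDerivAt (hU.mem_nhds hs))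
    (hreg s hs)).differentiableAt.differentiableWithinAt

lemma differentiableOn_rowMoment_comp (hU : IsOpen U) (ha : DifferentiableOn ℂ a U)
    (hb : DifferentiableOn ℂ b U) (him : ∀ s ∈ U, 0 < (b s).im)
    (hreg : ∀ s ∈ U, a s ∈ rowDomain k (b s)) :
    DifferentiableOn ℂ (fun s => rowMoment k (b s) (a s)) U :=
  (tendstoLocallyUniformlyOn_rowMoment k hU ha.continuousOn hb.continuousOn him).differentiableOn
    (Eventually.of_forall (differentiableOn_sum_pow_mul_rowTerm hU ha hb hreg)) hU

lemma hasSum_deriv_rowMoment_comp (hU : IsOpen U) (ha : DifferentiableOn ℂ a U)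
    (hb : DifferentiableOn ℂ b U) (him : ∀ s ∈ U, 0 < (b s).im)
    (hreg : ∀ s ∈ U, a s ∈ rowDomain k (b s)) (hs : s ∈ U) :
    HasSum (fun n : ℤ => (n : ℂ) ^ k *
        (deriv piCot (a s + n * b s) * (deriv a s + n * deriv b s)))
      (deriv (fun s => rowMoment k (b s) (a s)) s) := by
  have hnhds := hU.mem_nhds hs
  have hlim := (tendstoLocallyUniformlyOn_rowMoment k hU ha.continuousOn hb.continuousOn
    him).deriv (Eventually.of_forall (differentiableOn_sum_pow_mul_rowTerm hU ha hb hreg)) hU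
  refine (hlim.tendsto_at hs).congr fun t => ?_
  exact (HasDerivAt.fun_sum fun n _ => hasDerivAt_pow_mul_rowTerm_comp
    (ha.hasDerivAt hnhds) (hb.hasDerivAt hnhds) (hreg s hs)).deriv

lemma analyticAt_rowMoment (hτ : 0 < τ.im) (hz : z ∈ rowDomain k τ) :
    AnalyticAt ℂ (rowMoment k τ) z :=
  (differentiableOn_rowMoment_comp (isOpen_rowDomain k hτ) differentiableOn_id
    (differentiableOn_const τ) (fun _ _ => hτ) fun _ h => h).analyticAt
    ((isOpen_rowDomain k hτ).mem_nhds hz)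

lemma analyticAt_rowMoment_of_not_inLattice (k : ℕ) (hτ : 0 < τ.im) (hz : ¬ InLattice τ z) :
    AnalyticAt ℂ (rowMoment k τ) z :=
  analyticAt_rowMoment hτ (compl_inLattice_subset_rowDomain k τ hz)

lemma hasSum_deriv_rowMoment (hτ : 0 < τ.im) (hz : z ∈ rowDomain k τ) :
    HasSum (fun n : ℤ => (n : ℂ) ^ k * deriv piCot (z + n * τ)) (deriv (rowMoment k τ) z) := by
  simpa using hasSum_deriv_rowMoment_comp (isOpen_rowDomain k hτ) differentiableOn_id
    (differentiableOn_const τ) (fun _ _ => hτ) (fun _ h => h) hz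

/-- Termwise, `∂_τ` and `n ∂_z` agree on `rowTerm n`. -/
lemma hasDerivAt_rowMoment_comp (hU : IsOpen U) (hUH : ∀ s ∈ U, 0 < s.im)
    (ha : DifferentiableOn ℂ a U) (hreg : ∀ s ∈ U, ¬ InLattice s (a s)) (hs : s ∈ U) :
    HasDerivAt (fun s => rowMoment k s (a s))
      (deriv a s * deriv (rowMoment k s) (a s) + deriv (rowMoment (k + 1) s) (a s)) s := by
  have hmem (j : ℕ) : ∀ s ∈ U, a s ∈ rowDomain j s := fun s hs =>
    compl_inLattice_subset_rowDomain j s (hreg s hs)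
  have hsum := ((hasSum_deriv_rowMoment (hUH s hs) (hmem k s hs)).mul_left (deriv a s)).add
    (hasSum_deriv_rowMoment (hUH s hs) (hmem (k + 1) s hs))
  have hderiv := (hasSum_deriv_rowMoment_comp hU ha differentiableOn_id hUH (hmem k) hs).unique
    (hsum.congr_fun fun n => by simp only [id_eq, deriv_id', mul_one]; ring)
  rw [← hderiv]
  exact (differentiableOn_rowMoment_comp hU ha differentiableOn_id hUH (hmem k)).hasDerivAt
    (hU.mem_nhds hs)

end RowMoment

section Periodicity

variable {k : ℕ} {τ : ℂ}

lemma periodic_rowMoment (k : ℕ) (τ : ℂ) : Function.Periodic (rowMoment k τ) 1 := fun z => by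
  simp only [rowMoment, rowTerm_add_one]

lemma rowMoment_zero_neg (τ z : ℂ) : rowMoment 0 τ (-z) = -rowMoment 0 τ z := by
  simp only [rowMoment, pow_zero, one_mul, rowTerm_neg, tsum_neg]
  rw [← (Equiv.neg ℤ).tsum_eq fun n => rowTerm n τ z]
  simp

lemma hasSum_mul_sign_sub_sign (c : ℤ → ℂ) :
    HasSum (fun n : ℤ => c n * (Real.pi * I * ((n.sign : ℂ) - ((n + 1).sign : ℂ))))
      (-(Real.pi * I) * (c (-1) + c 0)) := by
  have hsupport : ∀ n ∉ ({-1, 0} : Finset ℤ),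
      c n * (Real.pi * I * ((n.sign : ℂ) - ((n + 1).sign : ℂ))) = 0 := fun n hn => by
    simp only [Finset.mem_insert, Finset.mem_singleton, not_or] at hn
    have hsign : (n + 1).sign = n.sign := by
      rcases lt_or_ge n 0 with h | h
      · rw [Int.sign_eq_neg_one_of_neg h, Int.sign_eq_neg_one_of_neg (by lia)]
      · rw [Int.sign_eq_one_of_pos (by lia), Int.sign_eq_one_of_pos (by lia)]
    rw [hsign, sub_self, mul_zero, mul_zero]
  convert! hasSum_sum_of_ne_finset_zero
    (L := SummationFilter.unconditional ℤ) hsupport using 1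
  rw [Finset.sum_pair (by decide)]
  simp only [neg_add_cancel, zero_add, Int.sign_neg, Int.sign_one, Int.sign_zero, Int.cast_neg,
    Int.cast_one, Int.cast_zero]
  ring

lemma rowMoment_zero_add_tau (hτ : 0 < τ.im) (z : ℂ) :
    rowMoment 0 τ (z + τ) = rowMoment 0 τ z - 2 * Real.pi * I := by
  have hshift := (Equiv.addRight (1 : ℤ)).hasSum_iff.mpr (hasSum_rowMoment 0 hτ z)
  refine (hasSum_rowMoment 0 hτ (z + τ)).unique ?_
  convert! hshift.add (hasSum_mul_sign_sub_sign 1) using 1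
  · funext n
    simp [rowTerm_add_tau]
  · simp only [Pi.one_apply]
    ring

lemma rowMoment_one_add_tau (hτ : 0 < τ.im) (z : ℂ) :
    rowMoment 1 τ (z + τ) = rowMoment 1 τ z - rowMoment 0 τ z + Real.pi * I := by
  have hshift (j : ℕ) := (Equiv.addRight (1 : ℤ)).hasSum_iff.mpr (hasSum_rowMoment j hτ z)
  refine (hasSum_rowMoment 1 hτ (z + τ)).unique ?_
  convert! ((hshift 1).sub (hshift 0)).add (hasSum_mul_sign_sub_sign Int.cast) using 1
  · funext n
    simp only [Function.comp_apply, Equiv.coe_addRight, rowTerm_add_tau, Int.cast_add, Int.cast_one,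
      pow_zero, pow_one]
    ring
  · simp

end Periodicity

section WeierstrassZeta

variable {τ z : ℂ} {zeta : ℂ → ℂ → ℂ} {eta1 : ℂ → ℂ}

lemma deriv_rowMoment_zero_add_wp_of_im_ne_zero (hτ : 0 < τ.im)
    (hz : ∀ n : ℤ, (z + n * τ).im ≠ 0) :
    deriv (rowMoment 0 τ) z + wp τ z = ∑' n : ℤ, -∑' m : ℤ, 1 / (m + n * τ) ^ 2 := by
  have hrow (n : ℤ) : HasSum (fun m : ℤ => 1 / (z + (m + n * τ)) ^ 2 - 1 / (m + n * τ) ^ 2)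
      (-deriv piCot (z + n * τ) - ∑' m : ℤ, 1 / (m + n * τ) ^ 2) := by
    have hsum : Summable fun m : ℤ => 1 / ((m : ℂ) + n * τ) ^ 2 := by
      simpa [add_comm] using EisensteinSeries.linear_right_summable τ n (k := 2) le_rfl
    refine ((hasSum_deriv_piCot (hz n)).sub hsum.hasSum).congr_fun fun m => ?_
    rw [add_comm (m : ℂ), add_assoc]
  have hmem : z ∈ rowDomain 0 τ := by
    rintro n - ⟨m, hm⟩
    exact hz n (by simp [← hm])
  have hwp := ((Equiv.prodComm ℤ ℤ).hasSum_iff.mpr (hasSum_wp hτ z)).prod_fiberwise hrow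
  refine (((hasSum_deriv_rowMoment hτ hmem).add hwp).congr_fun fun n => ?_).tsum_eq.symm
  ring

lemma exists_deriv_rowMoment_zero_add_wp_eq (hτ : 0 < τ.im) :
    ∃ K, ∀ z, ¬ InLattice τ z → deriv (rowMoment 0 τ) z + wp τ z = K := by
  refine ⟨∑' n : ℤ, -∑' m : ℤ, 1 / (m + n * τ) ^ 2, ?_⟩
  have hrow_im (n : ℤ) {z : ℂ} (h0 : 0 < z.im) (h1 : z.im < τ.im) : (z + n * τ).im ≠ 0 := by
    have him : (z + n * τ).im = z.im + n * τ.im := by simp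
    rw [him]
    rcases lt_or_ge n 0 with hn | hn
    · have : (n : ℝ) ≤ -1 := mod_cast Int.le_sub_one_of_lt hn
      nlinarith
    · have : (0 : ℝ) ≤ n := mod_cast hn
      positivity
  have han : AnalyticOnNhd ℂ (fun z => deriv (rowMoment 0 τ) z + wp τ z) {z | InLattice τ z}ᶜ :=
    fun z hz => (analyticAt_rowMoment_of_not_inLattice 0 hτ hz).deriv.add (analyticAt_wp hτ hz)
  have him : (τ / 2).im = τ.im / 2 := by simp
  refine han.eqOn_of_preconnected_of_eventuallyEq (z₀ := τ / 2) analyticOnNhd_const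
    (isConnected_compl_inLattice τ).isPreconnected ?_ ?_
  · rintro ⟨m, n, hmn⟩
    refine hrow_im (-n) (z := τ / 2) (by linarith) (by linarith) ?_
    simp [hmn]
  · have hopen : IsOpen {z : ℂ | 0 < z.im ∧ z.im < τ.im} :=
      (isOpen_lt continuous_const continuous_im).inter (isOpen_lt continuous_im continuous_const)
    filter_upwards [hopen.mem_nhds (show _ ∧ _ from ⟨by linarith, by linarith⟩)] with z hz
    exact deriv_rowMoment_zero_add_wp_of_im_ne_zero hτ fun n => hrow_im n hz.1 hz.2

lemma rowMoment_zero_eq_zeta_add_mul {K : ℂ} (hzeta : IsWeierstrassZeta zeta) (hτ : 0 < τ.im)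
    (hK : ∀ z, ¬ InLattice τ z → deriv (rowMoment 0 τ) z + wp τ z = K) (hz : ¬ InLattice τ z) :
    rowMoment 0 τ z = zeta τ z + K * z := by
  obtain ⟨hodd, hderiv, -⟩ := hzeta τ hτ
  have hzero : ∀ w, ¬ InLattice τ w →
      HasDerivAt (fun w => rowMoment 0 τ w - zeta τ w - K * w) 0 w := fun w hw => by
    have hE := (analyticAt_rowMoment_of_not_inLattice 0 hτ hw).differentiableAt.hasDerivAt
    refine ((hE.sub (hderiv w hw)).sub ((hasDerivAt_id w).const_mul K)).congr_deriv ?_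
    linear_combination hK w hw
  have hneg := (isOpen_compl_inLattice hτ).is_const_of_deriv_eq_zero
    (isConnected_compl_inLattice τ).isPreconnected
    (fun w hw => (hzero w hw).differentiableAt.differentiableWithinAt)
    (fun w hw => (hzero w hw).deriv) hz fun h => hz (neg_neg z ▸ InLattice.neg h)
  simp only [rowMoment_zero_neg, hodd] at hneg
  linear_combination hneg / 2

lemma deriv_rowMoment_zero_add_wp (hzeta : IsWeierstrassZeta zeta) (heta1 : IsEta1 zeta eta1)
    (hτ : 0 < τ.im) (hz : ¬ InLattice τ z) :
    deriv (rowMoment 0 τ) z + wp τ z = -eta1 τ := by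
  obtain ⟨K, hK⟩ := exists_deriv_rowMoment_zero_add_wp_eq hτ
  have h := rowMoment_zero_eq_zeta_add_mul hzeta hτ hK hz
  have h' := rowMoment_zero_eq_zeta_add_mul hzeta hτ hK (z := z + 1) fun h => hz h.of_add_one
  rw [periodic_rowMoment 0 τ z] at h'
  rw [hK z hz, heta1 τ hτ z hz]
  linear_combination h - h'

lemma rowMoment_zero_eq (hzeta : IsWeierstrassZeta zeta) (heta1 : IsEta1 zeta eta1)
    (hτ : 0 < τ.im) (hz : ¬ InLattice τ z) :
    rowMoment 0 τ z = zeta τ z - eta1 τ * z := by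
  rw [rowMoment_zero_eq_zeta_add_mul hzeta hτ
    (fun w hw => deriv_rowMoment_zero_add_wp hzeta heta1 hτ hw) hz, neg_mul, sub_eq_add_neg]

lemma hasDerivAt_rowMoment_zero (hzeta : IsWeierstrassZeta zeta) (heta1 : IsEta1 zeta eta1)
    (hτ : 0 < τ.im) (hz : ¬ InLattice τ z) :
    HasDerivAt (rowMoment 0 τ) (-wp τ z - eta1 τ) z := by
  refine (analyticAt_rowMoment_of_not_inLattice 0 hτ hz).differentiableAt.hasDerivAt.congr_deriv ?_
  linear_combination deriv_rowMoment_zero_add_wp hzeta heta1 hτ hz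

end WeierstrassZeta

section HeatEquation

variable {τ z : ℂ} {zeta : ℂ → ℂ → ℂ} {eta1 : ℂ → ℂ}

lemma tendsto_mul_rowMoment_zero_sq_sub_wp (hzeta : IsWeierstrassZeta zeta)
    (heta1 : IsEta1 zeta eta1) (hτ : 0 < τ.im) :
    Tendsto (fun z => z * (rowMoment 0 τ z ^ 2 - wp τ z)) (𝓝[≠] 0) (𝓝 0) := by
  set L := upperPeriodPair hτ
  have hid : Tendsto (fun z : ℂ => z) (𝓝[≠] 0) (𝓝 0) := tendsto_id.mono_left nhdsWithin_le_nhds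
  have hrem : Tendsto (fun z => zeta τ z - z⁻¹ - eta1 τ * z) (𝓝[≠] 0) (𝓝 0) := by
    simpa using (hzeta τ hτ).2.2.sub (hid.const_mul (eta1 τ))
  have hwpReg : Tendsto (L.weierstrassPExcept 0) (𝓝[≠] 0) (𝓝 (L.weierstrassPExcept 0 0)) :=
    (L.analyticAt_weierstrassPExcept 0).continuousAt.tendsto.mono_left nhdsWithin_le_nhds
  have hlim := (hrem.const_mul 2).add ((hid.mul (hrem.pow 2)).sub (hid.mul hwpReg))
  simp only [mul_zero, zero_mul, sub_zero, add_zero] at hlim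
  refine hlim.congr' ?_
  have hoff : ∀ᶠ z in 𝓝[≠] (0 : ℂ), ¬ InLattice τ z := by
    filter_upwards [mem_nhdsWithin_of_mem_nhds (L.compl_lattice_sdiff_singleton_mem_nhds 0),
      self_mem_nhdsWithin] with z hz hz0 hlat
    exact hz ⟨(mem_upperPeriodPair_lattice hτ).mpr hlat, hz0⟩
  filter_upwards [hoff, self_mem_nhdsWithin] with z hz (hz0 : z ≠ 0)
  have hwp := L.weierstrassPExcept_add 0 z
  simp only [ZeroMemClass.coe_zero] at hwp
  rw [rowMoment_zero_eq hzeta heta1 hτ hz, wp_eq_weierstrassP hτ, ← hwp]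
  field_simp
  ring

/-- The heat equation `4πi ∂_τ log θ₁ = (∂_z log θ₁)² + ∂_z² log θ₁`: up to functions of `τ` alone,
`rowMoment 1` is `∂_τ log θ₁` and `-℘` is `∂_z² log θ₁`. -/
lemma exists_rowMoment_one_add_eq (hzeta : IsWeierstrassZeta zeta) (heta1 : IsEta1 zeta eta1)
    (hτ : 0 < τ.im) : ∃ K, ∀ z, ¬ InLattice τ z →
      rowMoment 1 τ z + I / (4 * Real.pi) * (rowMoment 0 τ z ^ 2 - wp τ z) = K := by
  refine exists_eqOn_const_of_doubly_periodic hτ (fun z hz => ?_) (fun z => ?_) (fun z => ?_) ?_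
  · have hM := analyticAt_rowMoment_of_not_inLattice 1 hτ hz
    have hE := analyticAt_rowMoment_of_not_inLattice 0 hτ hz
    exact (hM.add (analyticAt_const.mul
      ((hE.pow 2).sub (analyticAt_wp hτ hz)))).differentiableAt.differentiableWithinAt
  · simp only [periodic_rowMoment _ τ z, periodic_wp_one hτ z]
  · rw [rowMoment_one_add_tau hτ, rowMoment_zero_add_tau hτ, periodic_wp_tau hτ]
    field_simp
    ring_nf
    simp only [I_sq, show I ^ 3 = -I by rw [pow_succ, I_sq]; ring]
    ring
  · have hid : Tendsto (fun z : ℂ => z) (𝓝[≠] 0) (𝓝 0) := tendsto_id.mono_left nhdsWithin_le_nhds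
    have hM := hid.mul ((analyticAt_rowMoment hτ
      (zero_mem_rowDomain_one hτ)).continuousAt.tendsto.mono_left nhdsWithin_le_nhds)
    have hsum := hM.add ((tendsto_mul_rowMoment_zero_sq_sub_wp hzeta heta1 hτ).const_mul
      (I / (4 * Real.pi)))
    rw [zero_mul, mul_zero, add_zero] at hsum
    exact hsum.congr fun z => by ring

lemma deriv_rowMoment_one (hzeta : IsWeierstrassZeta zeta) (heta1 : IsEta1 zeta eta1)
    (hτ : 0 < τ.im) (hz : ¬ InLattice τ z) :
    deriv (rowMoment 1 τ) z = I / (4 * Real.pi) *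
      (wpd τ z + 2 * (zeta τ z - eta1 τ * z) * (wp τ z + eta1 τ)) := by
  obtain ⟨K, hK⟩ := exists_rowMoment_one_add_eq hzeta heta1 hτ
  have heq : rowMoment 1 τ =ᶠ[𝓝 z]
      fun w => K - I / (4 * Real.pi) * (rowMoment 0 τ w ^ 2 - wp τ w) := by
    filter_upwards [(isOpen_compl_inLattice hτ).mem_nhds hz] with w hw
    rw [← hK w hw, add_sub_cancel_right]
  have hwp : HasDerivAt (wp τ) (wpd τ z) z := (analyticAt_wp hτ hz).differentiableAt.hasDerivAt
  have hE := hasDerivAt_rowMoment_zero hzeta heta1 hτ hz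
  rw [heq.deriv_eq, ((((hE.fun_pow 2).fun_sub hwp).const_mul _).const_sub K).deriv,
    rowMoment_zero_eq hzeta heta1 hτ hz]
  push_cast
  ring

lemma hasDerivAt_rowMoment_zero_comp {V : Set ℂ} {q : ℂ → ℂ} (hzeta : IsWeierstrassZeta zeta)
    (heta1 : IsEta1 zeta eta1) (hV : IsOpen V) (hVH : ∀ τ ∈ V, 0 < τ.im)
    (hq : DifferentiableOn ℂ q V) (hreg : ∀ τ ∈ V, ¬ InLattice τ (q τ)) (hτ : τ ∈ V) :
    HasDerivAt (fun s => rowMoment 0 s (q s)) (deriv q τ * (-wp τ (q τ) - eta1 τ) +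
      I / (4 * Real.pi) * (wpd τ (q τ) +
        2 * (zeta τ (q τ) - eta1 τ * q τ) * (wp τ (q τ) + eta1 τ))) τ := by
  rw [← (hasDerivAt_rowMoment_zero hzeta heta1 (hVH τ hτ) (hreg τ hτ)).deriv,
    ← deriv_rowMoment_one hzeta heta1 (hVH τ hτ) (hreg τ hτ)]
  exact hasDerivAt_rowMoment_comp hV hVH hq hreg hτ

end HeatEquation

section PainleveVI

lemma HamSystem.hasDerivAt_deriv {n : Fin 4 → ℂ} {zeta : ℂ → ℂ → ℂ} {eta1 p A : ℂ → ℂ} {V : Set ℂ}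
    {τ : ℂ} (hham : HamSystem n zeta eta1 V p A) (hzeta : IsWeierstrassZeta zeta)
    (heta1 : IsEta1 zeta eta1) (hV : IsOpen V) (hVH : ∀ τ ∈ V, 0 < τ.im)
    (hreg : ∀ τ ∈ V, ¬ InLattice τ (2 * p τ)) (hτ : τ ∈ V) :
    HasDerivAt (deriv p) (-1 / (4 * (Real.pi : ℂ) ^ 2) *
      (1 / 2 * ∑ k : Fin 4, n k * (n k + 1) * wpd τ (p τ + halfp τ k / 2) +
        wpd τ (2 * p τ))) τ := by
  obtain ⟨hp, hA⟩ := hham τ hτ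
  have hpdiff : DifferentiableOn ℂ p V := fun s hs =>
    (hham s hs).1.differentiableAt.differentiableWithinAt
  have hE := hasDerivAt_rowMoment_zero_comp hzeta heta1 hV hVH (hpdiff.const_mul 2) hreg hτ
  rw [(hp.const_mul 2).deriv] at hE
  have heq : deriv p =ᶠ[𝓝 τ] fun s =>
      -I / (4 * Real.pi) * (2 * A s - rowMoment 0 s (2 * p s)) := by
    filter_upwards [hV.mem_nhds hτ] with s hs
    rw [(hham s hs).1.deriv, rowMoment_zero_eq hzeta heta1 (hVH s hs) (hreg s hs)]
    ring
  refine HasDerivAt.congr_of_eventuallyEq ?_ heq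
  refine (((hA.const_mul 2).sub hE).const_mul (-I / (4 * Real.pi))).congr_deriv ?_
  generalize ∑ k : Fin 4, n k * (n k + 1) * wpd τ (p τ + halfp τ k / 2) = S
  have hpi : (Real.pi : ℂ) ≠ 0 := mod_cast Real.pi_ne_zero
  field_simp
  ring_nf
  simp only [I_sq]
  ring

/-- The terms of `8 ℘'(2z)` over the coset `ω_k + 2Λ_τ` are those of `℘'(z + ω_k/2)` over `Λ_τ`. -/
lemma sum_wpd_add_halfp {τ : ℂ} (hτ : 0 < τ.im) (z : ℂ) :
    ∑ k : Fin 4, wpd τ (z + halfp τ k / 2) = 8 * wpd τ (2 * z) := by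
  set e : (Fin 2 × Fin 2) × (ℤ × ℤ) ≃ ℤ × ℤ := (Equiv.prodComm _ _).trans
    ((Equiv.prodProdProdComm ℤ ℤ (Fin 2) (Fin 2)).trans
      (Equiv.prodCongr (Int.divModEquiv 2).symm (Int.divModEquiv 2).symm)) with he
  have h := (e.hasSum_iff.mpr (hasSum_wpd hτ (2 * z))).mul_left 8
  have hfib (r : Fin 2 × Fin 2) : HasSum (fun w : ℤ × ℤ => 8 *
      ((fun w : ℤ × ℤ => -2 / (2 * z + (w.1 + w.2 * τ)) ^ 3) ∘ e) (r, w))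
      (wpd τ (z + ((r.1 : ℕ) + (r.2 : ℕ) * τ) / 2)) := by
    refine (hasSum_wpd hτ (z + ((r.1 : ℕ) + (r.2 : ℕ) * τ) / 2)).congr_fun fun w => ?_
    have hew : 2 * z + (((e (r, w)).1 : ℂ) + ((e (r, w)).2 : ℂ) * τ) =
        2 * (z + ((r.1 : ℕ) + (r.2 : ℕ) * τ) / 2 + (w.1 + w.2 * τ)) := by
      simp only [he, Int.divModEquiv, Equiv.trans_apply, Equiv.prodComm_apply, Prod.swap_prod_mk,
        Equiv.prodProdProdComm_apply, Equiv.prodCongr_apply, Prod.map_apply, Equiv.symm_mk,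
        Equiv.coe_fn_mk]
      push_cast
      ring
    simp only [Function.comp_apply, hew, mul_pow]
    rw [← mul_div_assoc, show (2 : ℂ) ^ 3 = 8 by norm_num, mul_div_mul_left _ _ (by norm_num)]
  rw [(h.prod_fiberwise hfib).unique (hasSum_fintype _), Fintype.sum_prod_type, Fin.sum_univ_four,
    Fin.sum_univ_two, Fin.sum_univ_two, Fin.sum_univ_two]
  simp only [halfp, Matrix.cons_val, Fin.val_zero, Fin.val_one, Nat.cast_zero, Nat.cast_one,
    zero_mul, one_mul, add_zero, zero_add, zero_div]
  ring

end PainleveVI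

/-- Theorem 4.1, one direction: a solution of the Hamiltonian system
gives a solution of the elliptic form of Painlevé VI with `α_k = (1/2)(n_k + 1/2)²`. -/
theorem hamiltonian_system_implies_elliptic_PVI
    (n : Fin 4 → ℂ) (zeta : ℂ → ℂ → ℂ) (eta1 : ℂ → ℂ)
    (hzeta : IsWeierstrassZeta zeta) (heta1 : IsEta1 zeta eta1)
    (V : Set ℂ) (hVopen : IsOpen V) (hVconn : IsConnected V)
    (hVH : ∀ τ ∈ V, 0 < τ.im)
    (p A : ℂ → ℂ)
    (hpdiff : DifferentiableOn ℂ p V) (hAdiff : DifferentiableOn ℂ A V)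
    (hreg : ∀ τ ∈ V, ¬ InLattice τ (2 * p τ) ∧
      ∀ k : Fin 4, ¬ InLattice τ (p τ + halfp τ k / 2))
    (hham : HamSystem n zeta eta1 V p A) :
    ∀ τ ∈ V, HasDerivAt (deriv p)
      ((-1 / (4 * (Real.pi : ℂ) ^ 2)) *
        ∑ k : Fin 4, (1 / 2) * (n k + 1 / 2) ^ 2 * wpd τ (p τ + halfp τ k / 2)) τ := by
  intro τ hτ
  have hdup : wpd τ (2 * p τ) = 1 / 8 * ∑ k : Fin 4, wpd τ (p τ + halfp τ k / 2) := by
    rw [sum_wpd_add_halfp (hVH τ hτ)]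
    ring
  refine (hham.hasDerivAt_deriv hzeta heta1 hVopen hVH (fun s hs => (hreg s hs).1)
    hτ).congr_deriv ?_
  rw [hdup, Finset.mul_sum, Finset.mul_sum, ← Finset.sum_add_distrib]
  exact congrArg _ (Finset.sum_congr rfl fun k _ => by ring)
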